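/- For nonnegative integers a ≥ b ≥ d ≥ c and any q, the identity Σ_s [a−b choose b−s]_q [b−c choose s−c]_q [s−c choose d−c]_q q^{(b−s)^2} = [b−c choose d−c]_q [a−d choose b−d]_q holds, where the sum is over all integers s (only finitely many terms are nonzero). -/

import Mathlib

/-- Gaussian binomial coefficient `[n choose k]_q`. -/
def gaussNat (q : ℕ) : ℕ → ℕ → ℕ
  | _, 0 => 1
  | 0, _ + 1 => 0
  | n + 1, k + 1 => gaussNat q n k + q ^ (k + 1) * gaussNat q n (k + 1)

/-- Gaussian binomial coefficient `[n choose k]_q` with integer arguments; it is `0`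
unless `0 ≤ k ≤ n`. -/
def gaussZ (q : ℕ) (n k : ℤ) : ℕ :=
  if 0 ≤ k ∧ k ≤ n then gaussNat q n.toNat k.toNat else 0

/-!
Put `k = d - c`, `n = b - d` and `m = a - b`. Double counting of flags (the `q`-analogue of
`Nat.choose_mul`) gives `[b - c, s - c] [s - c, k] = [b - c, k] [n, s - d]`. So `[b - c, k]` comes
out of the sum, and what remains is the `q`-Vandermonde convolution for `[m + n, n]`. Its exponents
of `q` are the squares `(b - s) ^ 2` because the lower index of `[m + n, n]` is `n` itself.
-/

open Finset

/-- The Gaussian binomial coefficient `[n choose k]_q` for `q` in an arbitrary semiring, defined by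
the same `q`-Pascal recursion as `gaussNat`, which is the case of natural `q`. -/
def gaussBinom {R : Type*} [Semiring R] (q : R) : ℕ → ℕ → R
  | _, 0 => 1
  | 0, _ + 1 => 0
  | n + 1, k + 1 => gaussBinom q n k + q ^ (k + 1) * gaussBinom q n (k + 1)

/-- The Gaussian binomial coefficient with integer arguments, for `q` in an arbitrary semiring;
it is `0` unless `0 ≤ k ≤ n`, in particular for all negative `n`. -/
def gaussBinomInt {R : Type*} [Semiring R] (q : R) (n k : ℤ) : R :=
  if 0 ≤ k ∧ k ≤ n then gaussBinom q n.toNat k.toNat else 0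

section Semiring

variable {R : Type*} [Semiring R] (q : R)

@[simp]
theorem gaussBinom_zero_right (n : ℕ) : gaussBinom q n 0 = 1 := by
  cases n <;> rfl

@[simp]
theorem gaussBinom_zero_succ (k : ℕ) : gaussBinom q 0 (k + 1) = 0 :=
  rfl

theorem gaussBinom_succ_succ (n k : ℕ) :
    gaussBinom q (n + 1) (k + 1) = gaussBinom q n k + q ^ (k + 1) * gaussBinom q n (k + 1) :=
  rfl

theorem gaussBinom_eq_zero_of_lt {n k : ℕ} (h : n < k) : gaussBinom q n k = 0 := by
  induction n generalizing k with
  | zero => rw [← Nat.succ_pred_eq_of_pos h, Nat.succ_eq_add_one, gaussBinom_zero_succ]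
  | succ n ih =>
    obtain _ | k := k
    · omega
    · rw [gaussBinom_succ_succ, ih (by omega), ih (by omega), mul_zero, add_zero]

@[simp]
theorem gaussBinom_self (n : ℕ) : gaussBinom q n n = 1 := by
  induction n with
  | zero => rfl
  | succ n ih =>
    rw [gaussBinom_succ_succ, ih, gaussBinom_eq_zero_of_lt q n.lt_succ_self, mul_zero, add_zero]

theorem gaussBinomInt_natCast (n k : ℕ) : gaussBinomInt q n k = gaussBinom q n k := by
  unfold gaussBinomInt
  split_ifs with h
  · simp only [Int.toNat_natCast]
  · rw [gaussBinom_eq_zero_of_lt]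
    omega

variable {q} in
theorem nonneg_and_le_of_gaussBinomInt_ne_zero {n k : ℤ} (h : gaussBinomInt q n k ≠ 0) :
    0 ≤ k ∧ k ≤ n := by
  by_contra hk
  exact h (if_neg hk)

end Semiring

section CommSemiring

variable {R : Type*} [CommSemiring R] (q : R)

theorem gaussBinom_mul_gaussBinom : ∀ i j k : ℕ,
    gaussBinom q (i + j + k) (i + j) * gaussBinom q (i + j) i =
      gaussBinom q (i + j + k) i * gaussBinom q (j + k) j
  | 0, j, k => by simp
  | i + 1, 0, k => by simp
  | i + 1, j + 1, 0 => by simp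
  | i + 1, j + 1, k + 1 => by
    have h₁ : gaussBinom q (i + j + k + 2) (i + j + 1) * gaussBinom q (i + j + 1) i =
        gaussBinom q (i + j + k + 2) i * gaussBinom q (j + k + 2) (j + 1) := by
      convert gaussBinom_mul_gaussBinom i (j + 1) (k + 1) using 3 <;> omega
    have h₂ : gaussBinom q (i + j + k + 2) (i + j + 1) * gaussBinom q (i + j + 1) (i + 1) =
        gaussBinom q (i + j + k + 2) (i + 1) * gaussBinom q (j + k + 1) j := by
      convert gaussBinom_mul_gaussBinom (i + 1) j (k + 1) using 3 <;> omega
    have h₃ : gaussBinom q (i + j + k + 2) (i + j + 2) * gaussBinom q (i + j + 2) (i + 1) =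
        gaussBinom q (i + j + k + 2) (i + 1) * gaussBinom q (j + k + 1) (j + 1) := by
      convert gaussBinom_mul_gaussBinom (i + 1) (j + 1) k using 3 <;> omega
    rw [show i + 1 + (j + 1) + (k + 1) = i + j + k + 2 + 1 by omega,
      show i + 1 + (j + 1) = i + j + 1 + 1 by omega, show j + 1 + (k + 1) = j + k + 1 + 1 by omega]
    calc
      gaussBinom q (i + j + k + 2 + 1) (i + j + 1 + 1) * gaussBinom q (i + j + 1 + 1) (i + 1)
        = gaussBinom q (i + j + k + 2) (i + j + 1) * gaussBinom q (i + j + 1) i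
          + q ^ (i + 1) *
            (gaussBinom q (i + j + k + 2) (i + j + 1) * gaussBinom q (i + j + 1) (i + 1))
          + q ^ (i + j + 2) *
            (gaussBinom q (i + j + k + 2) (i + j + 2) * gaussBinom q (i + j + 2) (i + 1)) := by
          rw [gaussBinom_succ_succ q (i + j + k + 2), add_mul, mul_assoc,
            gaussBinom_succ_succ q (i + j + 1) i]
          ring
      _ = gaussBinom q (i + j + k + 2) i * gaussBinom q (j + k + 2) (j + 1)
          + q ^ (i + 1) * gaussBinom q (i + j + k + 2) (i + 1) *
            (gaussBinom q (j + k + 1) j + q ^ (j + 1) * gaussBinom q (j + k + 1) (j + 1)) := by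
          rw [h₁, h₂, h₃]
          ring
      _ = gaussBinom q (i + j + k + 2 + 1) (i + 1) * gaussBinom q (j + k + 1 + 1) (j + 1) := by
          rw [← gaussBinom_succ_succ, gaussBinom_succ_succ q (i + j + k + 2) i, add_mul]

/-- `q`-Vandermonde; `n - p.2` is truncated only where `gaussBinom q n p.2` vanishes. -/
theorem gaussBinom_add_eq_sum_antidiagonal (m n k : ℕ) :
    gaussBinom q (m + n) k =
      ∑ p ∈ antidiagonal k, q ^ (p.1 * (n - p.2)) * gaussBinom q m p.1 * gaussBinom q n p.2 := by
  induction n generalizing k with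
  | zero =>
    obtain _ | k := k
    · simp
    · simp [Nat.sum_antidiagonal_succ']
  | succ n ih =>
    obtain _ | k := k
    · simp
    have pascal_term : ∀ p ∈ antidiagonal k,
        q ^ (p.1 * (n + 1 - (p.2 + 1))) * gaussBinom q m p.1 * gaussBinom q (n + 1) (p.2 + 1) =
          q ^ (p.1 * (n - p.2)) * gaussBinom q m p.1 * gaussBinom q n p.2 + q ^ (k + 1) *
            (q ^ (p.1 * (n - (p.2 + 1))) * gaussBinom q m p.1 * gaussBinom q n (p.2 + 1)) := by
      rintro ⟨j, l⟩ hjl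
      obtain rfl : j + l = k := mem_antidiagonal.mp hjl
      obtain hl | hl := Nat.lt_or_ge n (l + 1)
      · simp [gaussBinom_succ_succ, gaussBinom_eq_zero_of_lt q hl]
      · obtain ⟨t, rfl⟩ := Nat.exists_eq_add_of_le hl
        rw [gaussBinom_succ_succ, Nat.add_sub_add_right, Nat.add_sub_cancel_left,
          show l + 1 + t - l = t + 1 by omega]
        ring
    rw [← add_assoc, gaussBinom_succ_succ, ih k, ih (k + 1), Nat.sum_antidiagonal_succ',
      Nat.sum_antidiagonal_succ', sum_congr rfl pascal_term, sum_add_distrib, mul_add, mul_sum]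
    simp only [gaussBinom_zero_right, Nat.sub_zero]
    ring

theorem sum_antidiagonal_gaussBinom_mul_pow_sq (k m n : ℕ) :
    ∑ p ∈ antidiagonal n, gaussBinom q m p.1 * gaussBinom q (k + n) (k + p.2) *
        gaussBinom q (k + p.2) k * q ^ p.1 ^ 2 =
      gaussBinom q (k + n) k * gaussBinom q (m + n) n := by
  rw [gaussBinom_add_eq_sum_antidiagonal q m n n, mul_sum]
  refine sum_congr rfl ?_
  rintro ⟨j, l⟩ hjl
  obtain rfl : l + j = n := (add_comm l j).trans (mem_antidiagonal.mp hjl)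
  have factor_out := gaussBinom_mul_gaussBinom q k l j
  rw [add_assoc] at factor_out
  dsimp only
  rw [mul_assoc (gaussBinom q m j), factor_out, Nat.add_sub_cancel_left]
  ring

end CommSemiring

theorem finsum_eq_sum_antidiagonal_of_support_subset_Icc {M : Type*} [AddCommMonoid M] {f : ℤ → M}
    {x : ℤ} {n : ℕ} (h : Function.support f ⊆ Set.Icc x (x + n)) :
    ∑ᶠ s, f s = ∑ p ∈ antidiagonal n, f (x + p.2) := by
  have injOn_add_snd : Set.InjOn (fun p : ℕ × ℕ => x + (p.2 : ℤ)) (antidiagonal n) := by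
    intro p hp p' hp' hpp'
    exact (HasAntidiagonal.antidiagonal_congr' hp hp').mpr (by simpa using hpp')
  rw [← sum_image injOn_add_snd]
  refine finsum_eq_sum_of_support_subset f fun s hs => ?_
  obtain ⟨hxs, hsx⟩ := h hs
  rw [mem_coe, mem_image]
  refine ⟨((x + n - s).toNat, (s - x).toNat), mem_antidiagonal.mpr ?_, ?_⟩ <;> dsimp only <;> omega

theorem gauss_identity_second_general {R : Type*} [CommSemiring R] (q : R) {a b c d : ℤ}
    (hcd : c ≤ d) (hdb : d ≤ b) (hba : b ≤ a) :
    ∑ᶠ s : ℤ, gaussBinomInt q (a - b) (b - s) * gaussBinomInt q (b - c) (s - c) *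
        gaussBinomInt q (s - c) (d - c) * q ^ (b - s).natAbs ^ 2 =
      gaussBinomInt q (b - c) (d - c) * gaussBinomInt q (a - d) (b - d) := by
  obtain ⟨k, rfl⟩ := Int.le.dest hcd
  obtain ⟨n, rfl⟩ := Int.le.dest hdb
  obtain ⟨m, rfl⟩ := Int.le.dest hba
  rw [finsum_eq_sum_antidiagonal_of_support_subset_Icc (x := c + k) (n := n)]
  · have hkn : c + k + n - c = (k + n : ℕ) := by push_cast; ring
    have hmn : c + k + n + m - (c + k) = (m + n : ℕ) := by push_cast; ring
    simp only [hkn, hmn, add_sub_cancel_left, gaussBinomInt_natCast]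
    rw [← sum_antidiagonal_gaussBinom_mul_pow_sq]
    refine sum_congr rfl ?_
    rintro ⟨j, l⟩ hjl
    obtain rfl : j + l = n := mem_antidiagonal.mp hjl
    have hj : c + k + (j + l : ℕ) - (c + k + l) = j := by push_cast; ring
    have hkl : c + k + l - c = (k + l : ℕ) := by push_cast; ring
    simp only [hj, hkl, gaussBinomInt_natCast, Int.natAbs_natCast]
  · intro s hs
    have hsb := left_ne_zero_of_mul (left_ne_zero_of_mul (left_ne_zero_of_mul hs))
    have hds := right_ne_zero_of_mul (left_ne_zero_of_mul hs)
    exact ⟨by linarith [(nonneg_and_le_of_gaussBinomInt_ne_zero hds).2],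
      by linarith [(nonneg_and_le_of_gaussBinomInt_ne_zero hsb).1]⟩

theorem gaussNat_eq_gaussBinom (q : ℕ) : ∀ n k : ℕ, gaussNat q n k = gaussBinom q n k
  | n, 0 => by cases n <;> rfl
  | 0, _ + 1 => rfl
  | n + 1, k + 1 => by
    rw [gaussNat, gaussBinom, gaussNat_eq_gaussBinom q n k, gaussNat_eq_gaussBinom q n (k + 1)]

theorem gaussZ_eq_gaussBinomInt (q : ℕ) (n k : ℤ) : gaussZ q n k = gaussBinomInt q n k := by
  rw [gaussZ, gaussBinomInt, gaussNat_eq_gaussBinom]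

/-- for `a ≥ b ≥ d ≥ c`,
`Σ_s [a−b, b−s]_q [b−c, s−c]_q [s−c, d−c]_q q^{(b−s)²} = [b−c, d−c]_q [a−d, b−d]_q`,
the sum being over all integers `s` (only finitely many terms are nonzero). -/
theorem gauss_identity_second (q : ℕ) (a b c d : ℕ)
    (hcd : c ≤ d) (hdb : d ≤ b) (hba : b ≤ a) :
    (∑ᶠ s : ℤ, gaussZ q ((a : ℤ) - b) ((b : ℤ) - s) * gaussZ q ((b : ℤ) - c) (s - c) *
        gaussZ q (s - c) ((d : ℤ) - c) *
        q ^ (((b : ℤ) - s).natAbs ^ 2)) =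
      gaussZ q ((b : ℤ) - c) ((d : ℤ) - c) * gaussZ q ((a : ℤ) - d) ((b : ℤ) - d) := by
  simp only [gaussZ_eq_gaussBinomInt]
  exact gauss_identity_second_general q (mod_cast hcd) (mod_cast hdb) (mod_cast hba)
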